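/- Let α > 0 and let ρ be a nonzero σ-finite measure on (0,∞) with ∫₀^∞ (y^{α−δ} ∨ y^{α+δ}) ρ(dy) < ∞ for some δ > 0. If ∫₀^∞ y^{α+iθ₀} ρ(dy) = 0 for some θ₀ ∈ ℝ, then there exists a σ-finite measure ν on (0,∞) whose tail is not regularly varying (with any exponent), such that ν⊛ρ has a regularly varying tail with exponent α and lim_{b↓0} limsup_{x→∞} (∫₀^b ρ(x/y,∞) ν(dy)) / ((ν⊛ρ)(x,∞)) = 0. -/

import Mathlib

/-!
The witness is the measure `ν` with density `α x^{-α-1} (1 + cos (θ log x))` on `(0,∞)`, where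
`θ = |θ₀|`. Its tail is `x^{-α} (1 + Re (c x^{iθ}))` with `c = α / (α - iθ)`. Since
`(ν ⊛ ρ)(x,∞) = ∫ ν(x/y,∞) ρ(dy)`, the oscillating term is multiplied by the conjugate of
`∫ y^{α+iθ} ρ(dy) = 0`, so `ν ⊛ ρ` has the exact power tail `x^{-α} ∫ y^α ρ(dy)`
(`mulConv_oscMeasure_Ioi`). On the other hand the tail of `ν` is a power times a nonconstant
periodic function of `log x`, which is not regularly varying (`not_hasRegVarTail_oscMeasure`);
here `θ ≠ 0` because the `α`-moment of `ρ` is positive.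

For the last condition, Tonelli's theorem gives
`∫₀^b ρ(x/y,∞) ν(dy) ≤ ∫_{z > x/b} ν(x/z,∞) ρ(dz) ≤ 2 x^{-α} ∫_{z > x/b} z^α ρ(dz)`,
and after division by the tail of `ν ⊛ ρ` this tends to `0` as `x → ∞`, for each fixed `b`.
-/

open MeasureTheory Set Filter ProbabilityTheory
open scoped ENNReal Topology

noncomputable section

/-- Multiplicative convolution of two measures (on `(0,∞)`, modeled as measures on `ℝ`):
`(ν ⊛ ρ)(B) = ∫ ν(x⁻¹ B) ρ(dx)`. -/
def mulConv (ν ρ : Measure ℝ) : Measure ℝ :=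
  ρ.bind fun x => ν.map fun y => x * y

/-- The measure `ν_α` on `(0,∞)`, with density `|α| x^{-(α+1)}` w.r.t. Lebesgue measure
when `α ≠ 0`, and density `x⁻¹` when `α = 0`. -/
def nuAlpha (α : ℝ) : Measure ℝ :=
  (volume.restrict (Ioi (0:ℝ))).withDensity fun x =>
    ENNReal.ofReal (if α = 0 then x⁻¹ else |α| * x ^ (-(α + 1)))

/-- `L` is slowly varying at infinity: `L(cx)/L(x) → 1` as `x → ∞`, for every `c > 0`. -/
def SlowlyVarying (L : ℝ → ℝ) : Prop :=
  ∀ c : ℝ, 0 < c → Tendsto (fun x => L (c * x) / L x) atTop (nhds 1)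

/-- The measure `μ` has a regularly varying (right) tail with exponent `α`:
`μ(x,∞) = x^{-α} L(x)` for all `x > 0`, where `L` is slowly varying
(and eventually positive) at infinity. -/
def HasRegVarTail (μ : Measure ℝ) (α : ℝ) : Prop :=
  ∃ L : ℝ → ℝ, SlowlyVarying L ∧ (∀ᶠ x in atTop, 0 < L x) ∧
    ∀ x : ℝ, 0 < x → μ (Ioi x) = ENNReal.ofReal (x ^ (-α) * L x)

/-- The moment condition `∫₀^∞ (y^{α-δ} ∨ y^{α+δ}) ρ(dy) < ∞`. -/
def MomentCond (ρ : Measure ℝ) (α δ : ℝ) : Prop :=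
  ∫⁻ y in Ioi (0:ℝ), ENNReal.ofReal (max (y ^ (α - δ)) (y ^ (α + δ))) ∂ρ < ⊤

/-- The nonvanishing condition `∫₀^∞ y^{α+iθ} ρ(dy) ≠ 0` for all `θ ∈ ℝ`. -/
def MellinNonvanishing (ρ : Measure ℝ) (α : ℝ) : Prop :=
  ∀ θ : ℝ, (∫ y in Ioi (0:ℝ), (y : ℂ) ^ ((α : ℂ) + (θ : ℂ) * Complex.I) ∂ρ) ≠ 0

/-- `ρ` has the cancellation property with respect to `{ν_α}`: for every σ-finite
measure `ν` on `(0,∞)`, `ν ⊛ ρ = ν_α ⊛ ρ` implies `ν = ν_α`. -/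
def HasCancellation (ρ : Measure ℝ) (α : ℝ) : Prop :=
  ∀ ν : Measure ℝ, SigmaFinite ν → ν (Iic 0) = 0 →
    mulConv ν ρ = mulConv (nuAlpha α) ρ → ν = nuAlpha α

/-- Condition (2.18): `lim_{b↓0} limsup_{x→∞} (∫₀^b ρ(x/y,∞) ν(dy)) / ((ν⊛ρ)(x,∞)) = 0`. -/
def Cond218 (ν ρ : Measure ℝ) : Prop :=
  Tendsto (fun b : ℝ =>
      limsup (fun x : ℝ =>
        (∫⁻ y in Ioc (0:ℝ) b, ρ (Ioi (x / y)) ∂ν).toReal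
          / ((mulConv ν ρ) (Ioi x)).toReal) atTop)
    (nhdsWithin 0 (Ioi 0)) (nhds 0)

/-- The log-periodic factor of the tail of `oscMeasure α θ`: it equals
`1 + Re (α / (α - iθ) * e^{iθs})`. -/
def osc (α θ s : ℝ) : ℝ :=
  1 + (α ^ 2 / (α ^ 2 + θ ^ 2)) * Real.cos (θ * s) - (α * θ / (α ^ 2 + θ ^ 2)) * Real.sin (θ * s)

/-- The perturbation of `nuAlpha α` with density `α x^{-α-1} (1 + cos (θ log x))` on `(0,∞)`. -/
def oscMeasure (α θ : ℝ) : Measure ℝ :=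
  (volume.restrict (Ioi (0:ℝ))).withDensity fun x =>
    ENNReal.ofReal (α * x ^ (-α - 1) * (1 + Real.cos (θ * Real.log x)))

instance (α θ : ℝ) : SigmaFinite (oscMeasure α θ) := by
  unfold oscMeasure; infer_instance

lemma oscMeasure_Iic (α θ : ℝ) : oscMeasure α θ (Iic 0) = 0 := by
  refine withDensity_absolutelyContinuous _ _ ?_
  rw [Measure.restrict_apply measurableSet_Iic, Iic_inter_Ioi, Ioc_self, measure_empty]

lemma abs_osc_sub_one_le {α : ℝ} (hα : 0 < α) (θ s : ℝ) : |osc α θ s - 1| ≤ 1 := by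
  have hD : 0 < α ^ 2 + θ ^ 2 := by positivity
  refine (sq_le_one_iff_abs_le_one _).mp ?_
  have h1 : osc α θ s - 1
      = α * (α * Real.cos (θ * s) - θ * Real.sin (θ * s)) / (α ^ 2 + θ ^ 2) := by
    unfold osc; field_simp; ring
  rw [h1, div_pow, div_le_iff₀ (by positivity)]
  have h2 := Real.sin_sq_add_cos_sq (θ * s)
  -- Cauchy–Schwarz for `(α, -θ)` and `(cos, sin)`
  have h3 : (α * Real.cos (θ * s) - θ * Real.sin (θ * s)) ^ 2 ≤ α ^ 2 + θ ^ 2 := by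
    nlinarith [sq_nonneg (α * Real.sin (θ * s) + θ * Real.cos (θ * s))]
  rw [mul_pow]
  nlinarith [mul_le_mul_of_nonneg_left h3 (sq_nonneg α), mul_nonneg (sq_nonneg θ) hD.le]

lemma osc_nonneg {α : ℝ} (hα : 0 < α) (θ s : ℝ) : 0 ≤ osc α θ s := by
  linarith [(abs_le.mp (abs_osc_sub_one_le hα θ s)).1]

lemma osc_le_two {α : ℝ} (hα : 0 < α) (θ s : ℝ) : osc α θ s ≤ 2 := by
  linarith [(abs_le.mp (abs_osc_sub_one_le hα θ s)).2]

lemma hasDerivAt_oscTail {α : ℝ} (hα : 0 < α) (θ : ℝ) {x : ℝ} (hx : 0 < x) :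
    HasDerivAt (fun u => -(u ^ (-α) * osc α θ (Real.log u)))
      (α * x ^ (-α - 1) * (1 + Real.cos (θ * Real.log x))) x := by
  have hD : 0 < α ^ 2 + θ ^ 2 := by positivity
  have hl : HasDerivAt (fun u => θ * Real.log u) (θ * x⁻¹) x :=
    (Real.hasDerivAt_log hx.ne').const_mul θ
  have hosc : HasDerivAt (fun u => osc α θ (Real.log u)) _ x :=
    ((hl.cos.const_mul (α ^ 2 / (α ^ 2 + θ ^ 2))).const_add 1).sub
      (hl.sin.const_mul (α * θ / (α ^ 2 + θ ^ 2)))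
  have hp : HasDerivAt (fun u : ℝ => u ^ (-α)) (-α * x ^ (-α - 1)) x :=
    Real.hasDerivAt_rpow_const (Or.inl hx.ne')
  refine (hp.mul hosc).neg.congr_deriv ?_
  have e : x ^ (-α) = x ^ (-α - 1) * x := by
    rw [Real.rpow_sub_one hx.ne']; field_simp
  rw [e]
  unfold osc
  field_simp
  ring

/-- The tail of `oscMeasure α θ` is a pure power times the log-periodic factor. -/
lemma oscMeasure_Ioi {α : ℝ} (hα : 0 < α) (θ : ℝ) {u : ℝ} (hu : 0 < u) :
    oscMeasure α θ (Ioi u) = ENNReal.ofReal (u ^ (-α) * osc α θ (Real.log u)) := by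
  have hder : ∀ x ∈ Ici u, HasDerivAt (fun u => -(u ^ (-α) * osc α θ (Real.log u)))
      (α * x ^ (-α - 1) * (1 + Real.cos (θ * Real.log x))) x :=
    fun x hx => hasDerivAt_oscTail hα θ (hu.trans_le hx)
  have hnn : ∀ x ∈ Ioi u, 0 ≤ α * x ^ (-α - 1) * (1 + Real.cos (θ * Real.log x)) := by
    intro x hx
    have hx0 : 0 < x := hu.trans hx
    have := Real.neg_one_le_cos (θ * Real.log x)
    exact mul_nonneg (by positivity) (by linarith)
  have hlim : Tendsto (fun u => -(u ^ (-α) * osc α θ (Real.log u))) atTop (𝓝 0) := by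
    rw [← neg_zero]
    refine Tendsto.neg ?_
    have h2 : Tendsto (fun u : ℝ => u ^ (-α) * 2) atTop (𝓝 0) := by
      simpa using (tendsto_rpow_neg_atTop hα).mul_const 2
    refine tendsto_of_tendsto_of_tendsto_of_le_of_le' tendsto_const_nhds h2 ?_ ?_
    · filter_upwards [eventually_gt_atTop 0] with x hx
      exact mul_nonneg (by positivity) (osc_nonneg hα _ _)
    · filter_upwards [eventually_gt_atTop 0] with x hx
      exact mul_le_mul_of_nonneg_left (osc_le_two hα _ _) (by positivity)
  have hint := integrableOn_Ioi_deriv_of_nonneg' hder hnn hlim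
  have hval := integral_Ioi_of_hasDerivAt_of_nonneg' hder hnn hlim
  rw [oscMeasure, withDensity_apply _ measurableSet_Ioi,
    Measure.restrict_restrict measurableSet_Ioi,
    inter_eq_left.mpr (Ioi_subset_Ioi hu.le),
    ← ofReal_integral_eq_lintegral_ofReal hint
      ((ae_restrict_iff' measurableSet_Ioi).mpr (ae_of_all _ hnn)), hval]
  simp

/-- The tail of a multiplicative convolution, as an integral of tails. The σ-finiteness of `ν`
makes the kernel in `mulConv` measurable, so that `Measure.bind` has its intended value. -/
lemma mulConv_Ioi (ν ρ : Measure ℝ) [SigmaFinite ν] (hsupp : ρ (Iic 0) = 0) (x : ℝ) :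
    mulConv ν ρ (Ioi x) = ∫⁻ z in Ioi (0:ℝ), ν (Ioi (x / z)) ∂ρ := by
  have hmeas : Measurable (fun x : ℝ => ν.map fun y => x * y) := by
    refine Measure.measurable_of_measurable_coe _ fun s hs => ?_
    have : (fun b : ℝ => (ν.map fun y => b * y) s)
        = fun b => ν (Prod.mk b ⁻¹' ((fun p : ℝ × ℝ => p.1 * p.2) ⁻¹' s)) := by
      ext b
      rw [Measure.map_apply (by fun_prop) hs]
      rfl
    rw [this]
    exact measurable_measure_prodMk_left ((by fun_prop : Measurable fun p : ℝ × ℝ => p.1 * p.2) hs)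
  rw [mulConv, Measure.bind_apply measurableSet_Ioi hmeas.aemeasurable]
  have hres : ρ.restrict (Ioi 0) = ρ := by
    apply Measure.restrict_eq_self_of_ae_mem
    rw [ae_iff]
    convert hsupp using 2
    ext; simp
  conv_lhs => rw [← hres]
  refine setLIntegral_congr_fun measurableSet_Ioi fun z hz => ?_
  have hz : 0 < z := hz
  rw [Measure.map_apply (by fun_prop) measurableSet_Ioi]
  congr 1
  ext y
  simp only [mem_preimage, mem_Ioi, div_lt_iff₀ hz, mul_comm]

/-- A tail which is a power times `osc` is not regularly varying: along the geometric sequences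
`e^{s + 2πn/θ}` the ratios `L (c x) / L x` are constant, so they would all have to be `1`. -/
lemma not_hasRegVarTail_oscMeasure {α θ : ℝ} (hα : 0 < α) (hθ : 0 < θ) (β : ℝ) :
    ¬ HasRegVarTail (oscMeasure α θ) β := by
  rintro ⟨L, hL, hLpos, htail⟩
  have hD : 0 < α ^ 2 + θ ^ 2 := by positivity
  have hLeq : ∀ᶠ r in atTop, L (Real.exp r) = Real.exp ((β - α) * r) * osc α θ r := by
    filter_upwards [Real.tendsto_exp_atTop.eventually hLpos] with r hr
    have h := htail _ (Real.exp_pos r)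
    rw [oscMeasure_Ioi hα θ (Real.exp_pos r), Real.log_exp,
      ENNReal.ofReal_eq_ofReal_iff (mul_nonneg (by positivity) (osc_nonneg hα _ _))
        (by positivity), ← Real.exp_mul, ← Real.exp_mul] at h
    have h2 : Real.exp ((β - α) * r) = Real.exp (r * -α) * Real.exp (r * β) := by
      rw [← Real.exp_add]; ring_nf
    have h3 : Real.exp (r * β) * Real.exp (r * -β) = 1 := by
      rw [← Real.exp_add]; simp
    rw [h2]
    linear_combination -(Real.exp (r * β)) * h - L (Real.exp r) * h3
  have hper : ∀ (n : ℕ) (s : ℝ), osc α θ (s + n * (2 * Real.pi / θ)) = osc α θ s := by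
    intro n s
    have : θ * (s + n * (2 * Real.pi / θ)) = θ * s + n * (2 * Real.pi) := by field_simp
    simp only [osc, this, Real.cos_add_nat_mul_two_pi, Real.sin_add_nat_mul_two_pi]
  have key : ∀ t : ℝ, Real.exp ((β - α) * t) * (osc α θ t / osc α θ 0) = 1 := by
    intro t
    have hT : Tendsto (fun n : ℕ => (n : ℝ) * (2 * Real.pi / θ)) atTop atTop :=
      tendsto_natCast_atTop_atTop.atTop_mul_const (by positivity)
    have hlim := (hL (Real.exp t) (Real.exp_pos t)).comp (Real.tendsto_exp_atTop.comp hT)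
    refine tendsto_nhds_unique (tendsto_const_nhds.congr' ?_) hlim
    filter_upwards [hT.eventually hLeq,
      (tendsto_atTop_add_const_left _ t hT).eventually hLeq] with n h1 h2
    simp only [Function.comp_apply]
    rw [← Real.exp_add, h1, h2, hper]
    have h0 := hper n 0
    rw [zero_add] at h0
    rw [h0, mul_add, Real.exp_add]
    field_simp
  have hβ : β = α := by
    have h := key (2 * Real.pi / θ)
    have h0 := hper 1 0
    rw [Nat.cast_one, one_mul, zero_add] at h0
    rw [h0] at h
    have hne : osc α θ 0 ≠ 0 := by
      intro h'; rw [h'] at h; simp at h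
    rw [div_self hne, mul_one, Real.exp_eq_one_iff] at h
    have : (0:ℝ) < 2 * Real.pi / θ := by positivity
    rcases mul_eq_zero.mp h with h | h <;> linarith
  have h := key (Real.pi / θ)
  have hθπ : θ * (Real.pi / θ) = Real.pi := by field_simp
  have hp : 0 < α ^ 2 / (α ^ 2 + θ ^ 2) := by positivity
  simp only [osc, hβ, sub_self, zero_mul, Real.exp_zero, one_mul, hθπ, Real.cos_pi, Real.sin_pi,
    mul_zero, Real.cos_zero, Real.sin_zero, sub_zero, mul_one] at h
  rw [div_eq_one_iff_eq (by positivity)] at h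
  linarith

lemma rpow_le_max {α δ y : ℝ} (hδ : 0 < δ) (hy : 0 < y) :
    y ^ α ≤ max (y ^ (α - δ)) (y ^ (α + δ)) := by
  rcases le_total y 1 with h | h
  · exact le_max_of_le_left (Real.rpow_le_rpow_of_exponent_ge hy h (by linarith))
  · exact le_max_of_le_right (Real.rpow_le_rpow_of_exponent_le h (by linarith))

lemma MomentCond.integrableOn_rpow {ρ : Measure ℝ} {α δ : ℝ} (hδ : 0 < δ)
    (h : MomentCond ρ α δ) : IntegrableOn (fun y : ℝ => y ^ α) (Ioi 0) ρ := by
  refine ⟨by fun_prop, ?_⟩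
  rw [hasFiniteIntegral_iff_ofReal]
  · refine lt_of_le_of_lt (setLIntegral_mono' measurableSet_Ioi fun y hy => ?_) h
    exact ENNReal.ofReal_le_ofReal (rpow_le_max hδ hy)
  · filter_upwards [ae_restrict_mem measurableSet_Ioi] with y hy
    exact Real.rpow_nonneg (le_of_lt hy) _

lemma integral_rpow_pos {ρ : Measure ℝ} {α : ℝ} (hρ : ρ ≠ 0) (hsupp : ρ (Iic 0) = 0)
    (hint : IntegrableOn (fun y : ℝ => y ^ α) (Ioi 0) ρ) : 0 < ∫ y in Ioi (0:ℝ), y ^ α ∂ρ := by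
  rw [setIntegral_pos_iff_support_of_nonneg_ae _ hint]
  · have hsub : Ioi (0:ℝ) ⊆ Function.support (fun y : ℝ => y ^ α) ∩ Ioi 0 :=
      fun y hy => ⟨(Real.rpow_pos_of_pos hy α).ne', hy⟩
    refine lt_of_lt_of_le (pos_iff_ne_zero.mpr fun h => hρ ?_) (measure_mono hsub)
    rw [← Measure.measure_univ_eq_zero, ← Iic_union_Ioi (a := (0:ℝ))]
    exact measure_union_null hsupp h
  · filter_upwards [ae_restrict_mem measurableSet_Ioi] with y hy
    exact Real.rpow_nonneg (le_of_lt hy) _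

/-- Real and imaginary parts of a vanishing Mellin transform; the frequency may be replaced by its
absolute value since these parts are even and odd in it. -/
lemma integral_cos_sin_eq_zero {ρ : Measure ℝ} {α θ : ℝ}
    (hint : IntegrableOn (fun y : ℝ => y ^ α) (Ioi 0) ρ)
    (h : (∫ y in Ioi (0:ℝ), (y : ℂ) ^ ((α : ℂ) + (θ : ℂ) * Complex.I) ∂ρ) = 0) :
    (∫ y in Ioi (0:ℝ), y ^ α * Real.cos (|θ| * Real.log y) ∂ρ) = 0 ∧
      (∫ y in Ioi (0:ℝ), y ^ α * Real.sin (|θ| * Real.log y) ∂ρ) = 0 := by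
  have hpt : ∀ y ∈ Ioi (0:ℝ), (y : ℂ) ^ ((α : ℂ) + (θ : ℂ) * Complex.I)
      = ((y ^ α * Real.cos (θ * Real.log y) : ℝ) : ℂ)
        + ((y ^ α * Real.sin (θ * Real.log y) : ℝ) : ℂ) * Complex.I := by
    intro y hy
    have hy : 0 < y := hy
    have hy' : (y : ℂ) ≠ 0 := by exact_mod_cast hy.ne'
    rw [Complex.cpow_add _ _ hy', ← Complex.ofReal_cpow hy.le, Complex.cpow_def_of_ne_zero hy',
      ← Complex.ofReal_log hy.le]
    have : (Real.log y : ℂ) * ((θ : ℂ) * Complex.I)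
        = ((θ * Real.log y : ℝ) : ℂ) * Complex.I := by push_cast; ring
    rw [this, Complex.exp_mul_I]
    push_cast
    ring
  have hc : IntegrableOn (fun y : ℝ => y ^ α * Real.cos (θ * Real.log y)) (Ioi 0) ρ :=
    hint.mul_bdd (c := 1) (by fun_prop) (ae_of_all _ fun y => Real.abs_cos_le_one _)
  have hs : IntegrableOn (fun y : ℝ => y ^ α * Real.sin (θ * Real.log y)) (Ioi 0) ρ :=
    hint.mul_bdd (c := 1) (by fun_prop) (ae_of_all _ fun y => Real.abs_sin_le_one _)
  rw [setIntegral_congr_fun measurableSet_Ioi hpt, integral_add hc.ofReal (hs.ofReal.mul_const _),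
    integral_mul_const, integral_complex_ofReal, integral_complex_ofReal] at h
  have hre := congrArg Complex.re h
  have him := congrArg Complex.im h
  simp at hre him
  rcases abs_choice θ with e | e <;> rw [e]
  · exact ⟨hre, him⟩
  · simp only [neg_mul, Real.cos_neg, Real.sin_neg, mul_neg, integral_neg, hre, him, neg_zero,
      and_self]

/-- The oscillating part of the tail of `oscMeasure α θ` is annihilated by `ρ`, so the
convolution has an exact power tail. -/
lemma mulConv_oscMeasure_Ioi {ρ : Measure ℝ} {α θ : ℝ} (hα : 0 < α) (hsupp : ρ (Iic 0) = 0)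
    (hint : IntegrableOn (fun y : ℝ => y ^ α) (Ioi 0) ρ)
    (hcos : (∫ y in Ioi (0:ℝ), y ^ α * Real.cos (θ * Real.log y) ∂ρ) = 0)
    (hsin : (∫ y in Ioi (0:ℝ), y ^ α * Real.sin (θ * Real.log y) ∂ρ) = 0)
    {x : ℝ} (hx : 0 < x) :
    mulConv (oscMeasure α θ) ρ (Ioi x)
      = ENNReal.ofReal (x ^ (-α) * ∫ y in Ioi (0:ℝ), y ^ α ∂ρ) := by
  have hc : IntegrableOn (fun y : ℝ => y ^ α * Real.cos (θ * Real.log y)) (Ioi 0) ρ :=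
    hint.mul_bdd (c := 1) (by fun_prop) (ae_of_all _ fun y => Real.abs_cos_le_one _)
  have hs : IntegrableOn (fun y : ℝ => y ^ α * Real.sin (θ * Real.log y)) (Ioi 0) ρ :=
    hint.mul_bdd (c := 1) (by fun_prop) (ae_of_all _ fun y => Real.abs_sin_le_one _)
  -- the coefficients of `y ^ α * cos` and `y ^ α * sin` in the expansion by the addition formulas
  obtain ⟨a, b, hab⟩ : ∃ a b : ℝ, ∀ y ∈ Ioi (0:ℝ),
      (x / y) ^ (-α) * osc α θ (Real.log (x / y))
        = x ^ (-α) * y ^ α + a * (y ^ α * Real.cos (θ * Real.log y))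
          + b * (y ^ α * Real.sin (θ * Real.log y)) := by
    refine ⟨x ^ (-α) * (α ^ 2 / (α ^ 2 + θ ^ 2) * Real.cos (θ * Real.log x)
        - α * θ / (α ^ 2 + θ ^ 2) * Real.sin (θ * Real.log x)),
      x ^ (-α) * (α ^ 2 / (α ^ 2 + θ ^ 2) * Real.sin (θ * Real.log x)
        + α * θ / (α ^ 2 + θ ^ 2) * Real.cos (θ * Real.log x)), fun y hy => ?_⟩
    have hy : 0 < y := hy
    rw [Real.div_rpow hx.le hy.le, Real.rpow_neg hy.le, div_inv_eq_mul,
      Real.log_div hx.ne' hy.ne', osc, mul_sub θ, Real.cos_sub, Real.sin_sub]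
    ring
  have hI1 : IntegrableOn (fun y => x ^ (-α) * y ^ α + a * (y ^ α * Real.cos (θ * Real.log y)))
      (Ioi 0) ρ := (hint.const_mul (x ^ (-α))).add (hc.const_mul a)
  have hI : IntegrableOn (fun y => (x / y) ^ (-α) * osc α θ (Real.log (x / y))) (Ioi 0) ρ :=
    (integrableOn_congr_fun hab measurableSet_Ioi).mpr (hI1.add (hs.const_mul b))
  rw [mulConv_Ioi _ _ hsupp, setLIntegral_congr_fun measurableSet_Ioi
    (fun z hz => oscMeasure_Ioi hα θ (div_pos hx hz)), ← ofReal_integral_eq_lintegral_ofReal hI]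
  · rw [setIntegral_congr_fun measurableSet_Ioi hab, integral_add hI1 (hs.const_mul b),
      integral_add (hint.const_mul _) (hc.const_mul a), integral_const_mul, integral_const_mul,
      integral_const_mul, hcos, hsin]
    simp
  · filter_upwards [ae_restrict_mem measurableSet_Ioi] with y hy
    exact mul_nonneg (Real.rpow_nonneg (div_pos hx hy).le _) (osc_nonneg hα _ _)

/-- By Tonelli, the contribution of `y ≤ b` only involves the part of `ρ` beyond `x / b`. -/
lemma lintegral_Ioc_le {ρ : Measure ℝ} [SigmaFinite ρ] {α θ : ℝ} (hα : 0 < α)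
    (hint : IntegrableOn (fun y : ℝ => y ^ α) (Ioi 0) ρ) {b x : ℝ} (hb : 0 < b) (hx : 0 < x) :
    (∫⁻ y in Ioc (0:ℝ) b, ρ (Ioi (x / y)) ∂(oscMeasure α θ))
      ≤ ENNReal.ofReal (x ^ (-α) * 2 * ∫ z in Ioi (x / b), z ^ α ∂ρ) := by
  have hxb : 0 < x / b := div_pos hx hb
  have hmeasS : MeasurableSet {p : ℝ × ℝ | x / p.1 < p.2} :=
    measurableSet_lt (by fun_prop) (by fun_prop)
  have hmeas : Measurable
      (Function.uncurry fun y z : ℝ => (Ioi (x / y)).indicator (1 : ℝ → ℝ≥0∞) z) :=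
    (measurable_one.indicator hmeasS : Measurable
      ({p : ℝ × ℝ | x / p.1 < p.2}.indicator (1 : ℝ × ℝ → ℝ≥0∞)))
  calc (∫⁻ y in Ioc (0:ℝ) b, ρ (Ioi (x / y)) ∂(oscMeasure α θ))
      = ∫⁻ y in Ioc (0:ℝ) b, ∫⁻ z, (Ioi (x / y)).indicator 1 z ∂ρ ∂(oscMeasure α θ) := by
        simp_rw [lintegral_indicator_one measurableSet_Ioi]
    _ = ∫⁻ z, ∫⁻ y in Ioc (0:ℝ) b, (Ioi (x / y)).indicator 1 z ∂(oscMeasure α θ) ∂ρ :=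
        lintegral_lintegral_swap hmeas.aemeasurable
    _ ≤ ∫⁻ z, (Ioi (x / b)).indicator (fun z => oscMeasure α θ (Ioi (x / z))) z ∂ρ := by
        refine lintegral_mono fun z => ?_
        by_cases hz : z ∈ Ioi (x / b)
        · have hz0 : 0 < z := hxb.trans hz
          rw [indicator_of_mem hz, ← lintegral_indicator_one measurableSet_Ioi,
            ← lintegral_indicator measurableSet_Ioc]
          refine lintegral_mono fun y => ?_
          by_cases hy : y ∈ Ioc 0 b
          · rw [indicator_of_mem hy]
            refine le_of_eq ?_
            have : z ∈ Ioi (x / y) ↔ y ∈ Ioi (x / z) := by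
              simp only [mem_Ioi, div_lt_iff₀ hy.1, div_lt_iff₀ hz0, mul_comm]
            by_cases h : z ∈ Ioi (x / y)
            · rw [indicator_of_mem h, indicator_of_mem (this.mp h)]; rfl
            · rw [indicator_of_notMem h, indicator_of_notMem (fun h' => h (this.mpr h'))]
          · rw [indicator_of_notMem hy]; exact zero_le
        · rw [indicator_of_notMem hz]
          refine le_of_eq (setLIntegral_eq_zero measurableSet_Ioc fun y hy => ?_)
          refine indicator_of_notMem (fun h => hz ?_) _
          exact lt_of_le_of_lt (div_le_div_of_nonneg_left hx.le hy.1 hy.2) h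
    _ = ∫⁻ z in Ioi (x / b), oscMeasure α θ (Ioi (x / z)) ∂ρ :=
        lintegral_indicator measurableSet_Ioi _
    _ ≤ ∫⁻ z in Ioi (x / b), ENNReal.ofReal (x ^ (-α) * 2 * z ^ α) ∂ρ := by
        refine setLIntegral_mono' measurableSet_Ioi fun z hz => ?_
        have hz0 : 0 < z := hxb.trans hz
        rw [oscMeasure_Ioi hα θ (div_pos hx hz0), Real.div_rpow hx.le hz0.le, Real.rpow_neg hz0.le,
          div_inv_eq_mul]
        refine ENNReal.ofReal_le_ofReal ?_
        have := mul_le_mul_of_nonneg_left (osc_le_two hα θ (Real.log (x / z)))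
          (by positivity : 0 ≤ x ^ (-α) * z ^ α)
        linarith
    _ = _ := by
        rw [← integral_const_mul, ofReal_integral_eq_lintegral_ofReal]
        · exact (hint.mono_set (Ioi_subset_Ioi hxb.le)).const_mul _
        · filter_upwards [ae_restrict_mem measurableSet_Ioi] with z hz
          have hz0 : 0 < z := hxb.trans hz
          positivity

lemma tendsto_setIntegral_Ioi_atTop {ρ : Measure ℝ} {f : ℝ → ℝ}
    (hint : IntegrableOn f (Ioi 0) ρ) :
    Tendsto (fun t => ∫ z in Ioi t, f z ∂ρ) atTop (𝓝 0) := by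
  have h := tendsto_setIntegral_of_antitone (μ := ρ) (s := fun t : ℝ => Ioi t) (f := f)
    (fun _ => measurableSet_Ioi) (fun _ _ h => Ioi_subset_Ioi h) ⟨0, hint⟩
  have he : (⋂ t : ℝ, Ioi t) = ∅ := by
    ext y; simp only [mem_iInter, mem_Ioi, mem_empty_iff_false, iff_false, not_forall]
    exact ⟨y, lt_irrefl y⟩
  rwa [he, setIntegral_empty] at h

/-- For the oscillating measure, the `limsup` in `Cond218` already vanishes for every `b > 0`. -/
lemma cond218_oscMeasure {ρ : Measure ℝ} [SigmaFinite ρ] {α θ C : ℝ} (hα : 0 < α) (hC : 0 < C)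
    (hint : IntegrableOn (fun y : ℝ => y ^ α) (Ioi 0) ρ)
    (htail : ∀ x : ℝ, 0 < x →
      mulConv (oscMeasure α θ) ρ (Ioi x) = ENNReal.ofReal (x ^ (-α) * C)) :
    Cond218 (oscMeasure α θ) ρ := by
  refine tendsto_const_nhds.congr' ?_
  filter_upwards [self_mem_nhdsWithin] with b hb
  have hb : 0 < b := hb
  symm
  apply Tendsto.limsup_eq
  have hlim : Tendsto (fun x => 2 * (∫ z in Ioi (x / b), z ^ α ∂ρ) / C) atTop (𝓝 0) := by
    simpa using (((tendsto_setIntegral_Ioi_atTop hint).comp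
      (tendsto_id.atTop_div_const hb)).const_mul 2).div_const C
  refine tendsto_of_tendsto_of_tendsto_of_le_of_le' tendsto_const_nhds hlim
    (Eventually.of_forall fun x => by positivity) ?_
  filter_upwards [eventually_gt_atTop 0] with x hx
  have hnn : 0 ≤ ∫ z in Ioi (x / b), z ^ α ∂ρ :=
    setIntegral_nonneg measurableSet_Ioi fun z hz =>
      Real.rpow_nonneg ((div_pos hx hb).trans hz).le _
  have h1 := ENNReal.toReal_mono ENNReal.ofReal_ne_top (lintegral_Ioc_le (θ := θ) hα hint hb hx)
  rw [ENNReal.toReal_ofReal (by positivity)] at h1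
  have hxα : 0 < x ^ (-α) := by positivity
  rw [htail x hx, ENNReal.toReal_ofReal (by positivity)]
  calc _ ≤ (x ^ (-α) * 2 * ∫ z in Ioi (x / b), z ^ α ∂ρ) / (x ^ (-α) * C) := by gcongr
    _ = _ := by field_simp

/-- Theorem 2.3, converse part. Let `α > 0` and `ρ` a nonzero σ-finite
measure on `(0,∞)` satisfying the moment condition. If `∫₀^∞ y^{α+iθ₀} ρ(dy) = 0` for
some `θ₀ ∈ ℝ`, then there is a σ-finite measure `ν` on `(0,∞)` without a regularly
varying tail (for any exponent) such that `ν ⊛ ρ` has a regularly varying tail with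
exponent `α` and condition (2.18) holds. -/
theorem exists_nonregvar_with_regvar_mulConv
    (α : ℝ) (hα : 0 < α) (ρ : Measure ℝ) [SigmaFinite ρ] (hρ : ρ ≠ 0)
    (hsupp : ρ (Iic 0) = 0) (hmom : ∃ δ : ℝ, 0 < δ ∧ MomentCond ρ α δ)
    (θ₀ : ℝ) (hθ₀ : (∫ y in Ioi (0:ℝ), (y : ℂ) ^ ((α : ℂ) + (θ₀ : ℂ) * Complex.I) ∂ρ) = 0) :
    ∃ ν : Measure ℝ, SigmaFinite ν ∧ ν (Iic 0) = 0 ∧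
      (∀ β : ℝ, 0 ≤ β → ¬ HasRegVarTail ν β) ∧
      HasRegVarTail (mulConv ν ρ) α ∧ Cond218 ν ρ := by
  obtain ⟨δ, hδ, hmom⟩ := hmom
  have hint := hmom.integrableOn_rpow hδ
  have hC := integral_rpow_pos hρ hsupp hint
  obtain ⟨hcos, hsin⟩ := integral_cos_sin_eq_zero hint hθ₀
  -- at `θ₀ = 0` the integral is the `α`-moment of the nonzero measure `ρ`, which is positive
  have hθ : 0 < |θ₀| := by
    rw [abs_pos]
    rintro rfl
    simp at hcos
    exact hC.ne' hcos
  have htail := fun x (hx : 0 < x) => mulConv_oscMeasure_Ioi hα hsupp hint hcos hsin hx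
  refine ⟨oscMeasure α |θ₀|, inferInstance, oscMeasure_Iic _ _,
    fun β _ => not_hasRegVarTail_oscMeasure hα hθ β, ?_, cond218_oscMeasure hα hC hint htail⟩
  refine ⟨fun _ => ∫ y in Ioi (0:ℝ), y ^ α ∂ρ, fun c _ => ?_, Eventually.of_forall fun _ => hC,
    htail⟩
  simp only [div_self hC.ne']
  exact tendsto_const_nhds
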